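/- Let b be a fractional ideal of O and let c be a canonical ideal of O normalized so that c : Ō = J^K(γ^b). Then for every v ∈ ℤ^r: c^{c:b}(v) = d − c^b(γ^b − v − 1). (Proposition 5.7) -/

import Mathlib

/-- The dimension over `k` of the quotient `A / B` of two `O`-submodules of `K`,
viewed as `k`-vector spaces. -/
noncomputable def qdim (k : Type) {O K : Type} [Field k] [CommRing O] [CommRing K]
    [Algebra k O] [Algebra O K] [Algebra k K] [IsScalarTower k O K]
    (A B : Submodule O K) : ℕ :=
  Module.finrank k
    (↥(Submodule.restrictScalars k A) ⧸
      (Submodule.comap (Submodule.restrictScalars k A).subtype (Submodule.restrictScalars k B)))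

/-- `b` is a fractional ideal of `O` in `K`: a nonzero `O`-submodule of `K` admitting a
regular denominator in `O`. -/
def IsFracIdeal {O K : Type} [CommRing O] [CommRing K] [Algebra O K]
    (b : Submodule O K) : Prop :=
  b ≠ ⊥ ∧ ∃ x ∈ nonZeroDivisors O, ∀ z ∈ b, x • z ∈ (1 : Submodule O K)

/-- The `i`-th component of the value vector `v(a)` of a (fractional) ideal `a`:
the minimum of `v i` over the nonzero elements of `a`. -/
noncomputable def idealVal {O K : Type} [CommRing O] [CommRing K] [Algebra O K] {r : ℕ}
    (v : Fin r → K → ℤ) (a : Submodule O K) (i : Fin r) : ℤ :=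
  sInf {n : ℤ | ∃ z ∈ a, z ≠ 0 ∧ v i z = n}

/-- `γ^b := v(b : Ō) - v(b·Ō)`. -/
noncomputable def gammaB {O K : Type} [CommRing O] [CommRing K] [Algebra O K] {r : ℕ}
    (v : Fin r → K → ℤ) (Obar b : Submodule O K) : Fin r → ℤ :=
  fun i => idealVal v (b / Obar) i - idealVal v (b * Obar) i

/-- `c` is a canonical ideal of `O`: a fractional ideal with `a = c : (c : a)` for every
fractional ideal `a`. -/
def IsCanonicalIdeal {O K : Type} [CommRing O] [CommRing K] [Algebra O K]
    (c : Submodule O K) : Prop :=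
  IsFracIdeal c ∧ ∀ a : Submodule O K, IsFracIdeal a → a = c / (c / a)

/-- `b` is self-dual: `b = c : b` for some canonical ideal `c`. -/
def IsSelfDual {O K : Type} [CommRing O] [CommRing K] [Algebra O K]
    (b : Submodule O K) : Prop :=
  ∃ c : Submodule O K, IsCanonicalIdeal c ∧ b = c / b

/-- The value set `S(b) = { v(z) - v(b·Ō) | z ∈ b \ {0} }`. -/
def Sset {O K : Type} [CommRing O] [CommRing K] [Algebra O K] {r : ℕ}
    (v : Fin r → K → ℤ) (Obar b : Submodule O K) : Set (Fin r → ℤ) :=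
  {w | ∃ z ∈ b, z ≠ 0 ∧ w = fun i => v i z - idealVal v (b * Obar) i}

/-- `Δ(n) = Δ_1(n) ∪ ⋯ ∪ Δ_r(n)` for a subset `S ⊆ ℤ^r`. -/
def Delta {r : ℕ} (S : Set (Fin r → ℤ)) (n : Fin r → ℤ) : Set (Fin r → ℤ) :=
  {σ | σ ∈ S ∧ ∃ i, σ i = n i ∧ ∀ j, j ≠ i → n j < σ j}

/-- `S ⊆ ℤ^r` is symmetric if there is `τ` with `w ∈ S ↔ Δ(τ - w) = ∅` for all `w`. -/
def IsSymmetricSet {r : ℕ} (S : Set (Fin r → ℤ)) : Prop :=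
  ∃ τ : Fin r → ℤ, ∀ w : Fin r → ℤ, w ∈ S ↔ Delta S (τ - w) = ∅

/-!
Write `E w` for `J^K(w)`. The normalization of `c` gives `c : E (γ - w) = E w`, hence
`(c : b) ∩ E w = c : (b + E (γ - w))`. Duality into `c` is an anti-isomorphism of lattices, so it
preserves lengths: the graded piece of `c : b` at `w` has the same length as
`(b + E u) / (b + E (u + 1))` with `u = γ - w - 1`. By the modular law this length and that of
`(b ∩ E u) / (b ∩ E (u + 1))` add up to the length of `E u / E (u + 1)`, which is a product of the
residue fields `Ō / m_i`. As `O` is local, dimension over `k` is length over `O` times the degree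
of the residue field of `O`, so the identity of lengths becomes one of dimensions.
-/

section Length

variable {R V : Type*} [Ring R] [AddCommGroup V] [Module R V]

/-- The length of the quotient `A / B` of two submodules `B ≤ A` (of `A / (A ⊓ B)` in general). -/
noncomputable def quotLength (A B : Submodule R V) : ℕ∞ :=
  Module.length R (A ⧸ B.submoduleOf A)

/-- The correspondence theorem for a quotient `A / B` of two submodules of an ambient module. -/
def submoduleQuotientOrderIsoIcc {A B : Submodule R V} (h : B ≤ A) :
    Submodule R (A ⧸ B.submoduleOf A) ≃o Set.Icc B A where
  toFun P := ⟨(P.comap (B.submoduleOf A).mkQ).map A.subtype, by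
    refine ⟨?_, Submodule.map_subtype_le _ _⟩
    calc B = (B.submoduleOf A).map A.subtype :=
        ((Submodule.map_comap_subtype A B).trans (inf_eq_right.2 h)).symm
      _ ≤ _ := Submodule.map_mono (Submodule.le_comap_mkQ _ P)⟩
  invFun N := (N.1.submoduleOf A).map (B.submoduleOf A).mkQ
  left_inv P := by
    simp only [Submodule.submoduleOf, Submodule.comap_map_eq_of_injective A.injective_subtype]
    exact Submodule.map_comap_eq_of_surjective (Submodule.mkQ_surjective _) P
  right_inv N := by
    ext1
    have hB : B.submoduleOf A ≤ N.1.submoduleOf A := Submodule.comap_mono N.2.1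
    simp only [Submodule.comap_map_mkQ, sup_eq_right.2 hB]
    exact (Submodule.map_comap_subtype A N.1).trans (inf_eq_right.2 N.2.2)
  map_rel_iff' {P Q} := by
    simp only [Equiv.coe_fn_mk]
    rw [← Subtype.coe_le_coe]
    rw [Submodule.map_le_map_iff_of_injective A.injective_subtype,
      Submodule.comap_le_comap_iff_of_surjective (Submodule.mkQ_surjective _)]

lemma coe_quotLength {A B : Submodule R V} (h : B ≤ A) :
    (quotLength A B : WithBot ℕ∞) = Order.krullDim (Set.Icc B A) := by
  rw [quotLength, Module.coe_length,
    Order.krullDim_eq_of_orderIso (submoduleQuotientOrderIsoIcc h)]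

lemma quotLength_add_quotLength {A B C : Submodule R V} (hBA : B ≤ A) (hCB : C ≤ B) :
    quotLength B C + quotLength A B = quotLength A C := by
  let i := Submodule.inclusion hBA
  have hC : C.submoduleOf B = (C.submoduleOf A).comap i := rfl
  have hle : C.submoduleOf A ≤ B.submoduleOf A := Submodule.comap_mono hCB
  refine (Module.length_eq_add_of_exact ((C.submoduleOf B).mapQ (C.submoduleOf A) i hC.le)
    (Submodule.factor hle) ?_ (Submodule.factor_surjective hle) ?_).symm
  · rw [← LinearMap.ker_eq_bot, Submodule.ker_mapQ, ← hC, Submodule.mkQ_map_self]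
  · rw [LinearMap.exact_iff, Submodule.factor, Submodule.ker_mapQ, Submodule.range_mapQ,
      Submodule.range_inclusion]
    rfl

lemma quotLength_inf_right (A B : Submodule R V) :
    quotLength A (A ⊓ B) = quotLength (A ⊔ B) B :=
  (LinearMap.quotientInfEquivSupQuotient A B).length_eq

lemma quotLength_inf_add_quotLength_sup (b : Submodule R V) {E F : Submodule R V} (h : F ≤ E) :
    quotLength (b ⊓ E) (b ⊓ F) + quotLength (b ⊔ E) (b ⊔ F) = quotLength E F := by
  have hinf : quotLength (b ⊓ E) (b ⊓ F) = quotLength (b ⊓ E ⊔ F) F := by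
    rw [← quotLength_inf_right, inf_assoc, inf_eq_right.2 h]
  have hsup : quotLength (b ⊔ E) (b ⊔ F) = quotLength E (b ⊓ E ⊔ F) := by
    rw [inf_comm b, inf_sup_assoc_of_le b h, quotLength_inf_right, sup_left_comm, sup_eq_left.2 h]
  rw [hinf, hsup, quotLength_add_quotLength (sup_le inf_le_right h) le_sup_right]

end Length

section Residue

lemma finrank_eq_toNat_length (k V : Type*) [DivisionRing k] [AddCommGroup V] [Module k V] :
    Module.finrank k V = (Module.length k V).toNat := by
  rw [Module.length_eq_rank, Cardinal.toNat_toENat, Module.finrank]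

lemma finrank_eq_toNat_length_mul (k O : Type*) [Field k] [CommRing O] [IsLocalRing O]
    [Algebra k O] (V : Type*) [AddCommGroup V] [Module O V] [Module k V] [IsScalarTower k O V] :
    Module.finrank k V = (Module.length O V).toNat *
      Module.finrank k (IsLocalRing.ResidueField O) := by
  rw [finrank_eq_toNat_length, finrank_eq_toNat_length,
    IsLocalRing.length_restrictScalars k O V, ENat.toNat_mul,
    Module.length_eq_of_surjective (R := IsLocalRing.ResidueField k) (S := k)
      IsLocalRing.residue_surjective]

lemma qdim_eq_toNat_quotLength_mul (k : Type) {O K : Type} [Field k] [CommRing O]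
    [IsLocalRing O] [CommRing K] [Algebra k O] [Algebra O K] [Algebra k K] [IsScalarTower k O K]
    (A B : Submodule O K) :
    qdim k A B = (quotLength A B).toNat * Module.finrank k (IsLocalRing.ResidueField O) := by
  rw [quotLength, ← finrank_eq_toNat_length_mul k O]
  exact (Submodule.Quotient.restrictScalarsEquiv k (B.submoduleOf A)).finrank_eq

lemma length_quotient_ne_top (R : Type*) {S : Type*} [CommRing R] [CommRing S] [Algebra R S]
    [Module.Finite R S] (P : Ideal S) [P.IsMaximal] : Module.length R (S ⧸ P) ≠ ⊤ := by
  let _ := Ideal.Quotient.field (P.under R)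
  rw [Module.length_eq_of_surjective (R := R ⧸ P.under R) Ideal.Quotient.mk_surjective,
    Module.length_eq_finrank]
  exact ENat.natCast_ne_top _

lemma length_quotient_iInf (R : Type*) {S ι : Type*} [CommRing R] [CommRing S] [Algebra R S]
    [Fintype ι] {I : ι → Ideal S} (hI : Pairwise (Function.onFun IsCoprime I)) :
    Module.length R (S ⧸ ⨅ i, I i) = ∑ i, Module.length R (S ⧸ I i) := by
  let e : (S ⧸ ⨅ i, I i) ≃ₗ[R] ((i : ι) → S ⧸ I i) :=
    { Ideal.quotientInfRingEquivPiQuotient I hI with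
      map_smul' r z := by
        induction z using Submodule.Quotient.induction_on
        rfl }
  rw [e.length_eq, Module.length_pi_of_fintype]

end Residue

section SubmoduleDiv

variable {R A : Type*} [CommSemiring R] [CommSemiring A] [Algebra R A]

lemma submodule_div_antitone (C : Submodule R A) : Antitone (C / ·) := fun _ _ h =>
  Submodule.le_div_iff.2 fun z hz y hy => Submodule.le_div_iff.1 le_rfl z hz y (h hy)

lemma submodule_div_sup (C I J : Submodule R A) : C / (I ⊔ J) = C / I ⊓ C / J :=
  eq_of_forall_le_iff fun N => by
    rw [le_inf_iff, Submodule.le_div_iff_mul_le, Submodule.le_div_iff_mul_le,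
      Submodule.le_div_iff_mul_le, Submodule.mul_sup, sup_le_iff]

lemma submodule_div_mul (C I J : Submodule R A) : C / (I * J) = C / I / J :=
  eq_of_forall_le_iff fun N => by
    rw [Submodule.le_div_iff_mul_le, Submodule.le_div_iff_mul_le, Submodule.le_div_iff_mul_le,
      mul_right_comm, mul_assoc]

lemma mem_div_span_singleton {C : Submodule R A} {x z : A} :
    z ∈ C / Submodule.span R {x} ↔ z * x ∈ C := by
  rw [← Submodule.span_singleton_le_iff_mem, Submodule.le_div_iff_mul_le,
    Submodule.span_mul_span, Set.singleton_mul_singleton, Submodule.span_singleton_le_iff_mem]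

end SubmoduleDiv

section FractionalIdeals

variable {O K : Type} [CommRing O] [CommRing K] [Algebra O K] {A B : Submodule O K}

lemma isFracIdeal_iff : IsFracIdeal A ↔ A ≠ ⊥ ∧ IsFractional (nonZeroDivisors O) A := by
  simp only [IsFracIdeal, IsFractional, Submodule.mem_one, IsLocalization.IsInteger,
    RingHom.mem_rangeS]

namespace IsFracIdeal

lemma mono (hB : IsFracIdeal B) (hA : A ≠ ⊥) (h : A ≤ B) : IsFracIdeal A :=
  ⟨hA, hB.2.imp fun _ hx => ⟨hx.1, fun z hz => hx.2 z (h hz)⟩⟩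

lemma sup (hA : IsFracIdeal A) (hB : IsFracIdeal B) : IsFracIdeal (A ⊔ B) := by
  rw [isFracIdeal_iff] at hA hB ⊢
  exact ⟨ne_bot_of_le_ne_bot hA.1 le_sup_left, hA.2.sup hB.2⟩

lemma mul [NoZeroDivisors K] (hA : IsFracIdeal A) (hB : IsFracIdeal B) :
    IsFracIdeal (A * B) := by
  rw [isFracIdeal_iff] at hA hB ⊢
  exact ⟨mul_ne_zero hA.1 hB.1, hA.2.mul hB.2⟩

end IsFracIdeal

end FractionalIdeals

section FractionField

variable {O K : Type} [CommRing O] [Field K] [Algebra O K] [IsFractionRing O K]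
  {A B C : Submodule O K}

lemma isFracIdeal_span_singleton {x : K} (hx : x ≠ 0) : IsFracIdeal (Submodule.span O {x}) :=
  isFracIdeal_iff.2 ⟨by simpa only [ne_eq, Submodule.span_singleton_eq_bot] using hx,
    FractionalIdeal.isFractional_span_singleton x⟩

lemma isFracIdeal_toSubmodule (S : Subalgebra O K) [Module.Finite O S] :
    IsFracIdeal (Subalgebra.toSubmodule S) :=
  isFracIdeal_iff.2 ⟨Submodule.ne_bot_iff _ |>.2 ⟨1, S.one_mem, one_ne_zero⟩,
    FractionalIdeal.isFractional_of_fg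
      ((Module.Finite.iff_fg (N := Subalgebra.toSubmodule S)).1 ‹_›)⟩

variable [IsDomain O]

lemma IsFracIdeal.div (hC : IsFracIdeal C) (hA : IsFracIdeal A) : IsFracIdeal (C / A) := by
  obtain ⟨x, hx, hxA⟩ := hA.2
  obtain ⟨y, hy, hy0⟩ := Submodule.exists_mem_ne_zero_of_ne_bot hC.1
  have hxy : x • y ∈ C / A := Submodule.mem_div_iff_forall_mul_mem.2 fun z hz => by
    obtain ⟨t, ht⟩ := Submodule.mem_one.1 (hxA z hz)
    rw [smul_mul_assoc, mul_comm, ← smul_mul_assoc, ← ht, ← Algebra.smul_def]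
    exact C.smul_mem t hy
  have hxy0 : x • y ≠ 0 := by
    rw [Algebra.smul_def]
    exact mul_ne_zero (IsFractionRing.to_map_ne_zero_of_mem_nonZeroDivisors hx) hy0
  rw [isFracIdeal_iff] at hA hC ⊢
  exact ⟨Submodule.ne_bot_iff _ |>.2 ⟨x • y, hxy, hxy0⟩, hC.2.div_of_nonzero hA.2 hA.1⟩

namespace IsCanonicalIdeal

/-- Duality with respect to a canonical ideal, as an anti-isomorphism of the interval between
two fractional ideals onto the interval between their duals. -/
def orderIsoIcc (hC : IsCanonicalIdeal C) (hA : IsFracIdeal A) (hB : IsFracIdeal B) :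
    Set.Icc B A ≃o (Set.Icc (C / A) (C / B))ᵒᵈ :=
  have hIcc {A B N : Submodule O K} (hA : IsFracIdeal A) (hB : IsFracIdeal B)
      (hN : N ∈ Set.Icc B A) : N = C / (C / N) :=
    hC.2 N (hA.mono (ne_bot_of_le_ne_bot hB.1 hN.1) hN.2)
  { toFun N := OrderDual.toDual
      ⟨C / N.1, submodule_div_antitone C N.2.2, submodule_div_antitone C N.2.1⟩
    invFun N := ⟨C / (OrderDual.ofDual N).1,
      (hC.2 B hB).trans_le (submodule_div_antitone C (OrderDual.ofDual N).2.2),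
      (submodule_div_antitone C (OrderDual.ofDual N).2.1).trans_eq (hC.2 A hA).symm⟩
    left_inv N := Subtype.ext (hIcc hA hB N.2).symm
    right_inv N := congrArg OrderDual.toDual
      (Subtype.ext (hIcc (hC.1.div hB) (hC.1.div hA) (OrderDual.ofDual N).2).symm)
    map_rel_iff' {N P} := by
      refine ⟨fun h => ?_, fun h => submodule_div_antitone C h⟩
      rw [← Subtype.coe_le_coe, hIcc hA hB N.2, hIcc hA hB P.2]
      exact submodule_div_antitone C h }

lemma quotLength_div (hC : IsCanonicalIdeal C) (hA : IsFracIdeal A) (hB : IsFracIdeal B)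
    (h : B ≤ A) : quotLength (C / B) (C / A) = quotLength A B := by
  apply WithBot.coe_injective
  rw [coe_quotLength h, coe_quotLength (submodule_div_antitone C h),
    Order.krullDim_eq_of_orderIso (hC.orderIsoIcc hA hB), Order.krullDim_orderDual]

end IsCanonicalIdeal

end FractionField

section WeakApproximation

lemma exists_forall_lt_mul_pow {R ι : Type*} [CommRing R] [Finite ι]
    {ν : ι → AddValuation R (WithTop ℤ)} {s y : ι → R} (hs : ∀ i j, ν j (s i) ≠ ⊤)
    (hy : ∀ i j, j ≠ i → 1 ≤ ν j (y i)) (w : ι → ℤ) :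
    ∃ n : ℕ, ∀ i j, j ≠ i → (w j : WithTop ℤ) < ν j (s i * y i ^ n) := by
  have hij (i j : ι) (h : j ≠ i) :
      ∀ᶠ n : ℕ in Filter.atTop, (w j : WithTop ℤ) < ν j (s i * y i ^ n) := by
    obtain ⟨m, hm⟩ := WithTop.ne_top_iff_exists.1 (hs i j)
    filter_upwards [Filter.eventually_gt_atTop (w j - m).toNat] with n hn
    have hn' : w j < m + n := by lia
    calc (w j : WithTop ℤ) < m + n • (1 : WithTop ℤ) := by
          rw [nsmul_one]
          exact_mod_cast hn'
      _ ≤ ν j (s i * y i ^ n) := by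
          rw [AddValuation.map_mul, AddValuation.map_pow, ← hm]
          gcongr
          exact hy i j h
  simpa only [Filter.eventually_all] using
    (Filter.eventually_all.2 fun i => Filter.eventually_all.2 fun j =>
      Filter.eventually_imp_distrib_left.2 (hij i j)).exists

lemma exists_ne_zero_forall_addValuation_eq {K ι : Type*} [Field K] [Finite ι]
    {ν : ι → AddValuation K (WithTop ℤ)} (hsurj : ∀ i, Function.Surjective (ν i))
    (hsep : ∀ i, ∃ y, ν i y = 0 ∧ ∀ j, j ≠ i → 1 ≤ ν j y) (w : ι → ℤ) :
    ∃ x ≠ 0, ∀ i, ν i x = w i := by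
  classical
  have := Fintype.ofFinite ι
  cases isEmpty_or_nonempty ι with
  | inl _ => exact ⟨1, one_ne_zero, isEmptyElim⟩
  | inr _ =>
  choose s hs using fun i => hsurj i (w i)
  choose y hyi hyj using hsep
  have hs0 (i : ι) : s i ≠ 0 := fun h => by simpa [h] using hs i
  obtain ⟨n, hn⟩ := exists_forall_lt_mul_pow (s := s) (y := y)
    (fun i j => (ν j).ne_top_iff.2 (hs0 i)) hyj w
  have hval (i : ι) : ν i (∑ j, s j * y j ^ n) = w i := by
    have hi : ν i (s i * y i ^ n) = w i := by simp [hs, hyi]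
    rw [← Finset.add_sum_erase _ _ (Finset.mem_univ i), ← hi]
    refine AddValuation.map_add_eq_of_lt_left _ (AddValuation.map_lt_sum _ ?_ fun j hj => ?_)
    all_goals rw [hi]
    · exact WithTop.coe_ne_top
    · exact hn j i (Finset.ne_of_mem_erase hj).symm
  refine ⟨_, fun h => ?_, hval⟩
  simpa [h] using hval (Classical.arbitrary ι)

end WeakApproximation

/-- `ν` is the family of normalized discrete valuations attached to the pairwise distinct maximal
ideals `M i` of `S`, where `S` is the intersection of the valuation rings. -/
structure IsValuationFamily {O K ι : Type*} [CommRing O] [Field K] [Algebra O K]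
    (S : Subalgebra O K) (M : ι → Ideal S) (ν : ι → AddValuation K (WithTop ℤ)) : Prop where
  surjective : ∀ i, Function.Surjective (ν i)
  isMaximal : ∀ i, (M i).IsMaximal
  injective : Function.Injective M
  mem_iff : ∀ x, x ∈ S ↔ ∀ i, 0 ≤ ν i x
  mem_ideal_iff : ∀ i (x : S), x ∈ M i ↔ 1 ≤ ν i x

section ValueIdeal

variable {O K ι : Type*} [CommRing O] [Field K] [Algebra O K] {S : Subalgebra O K}
  {M : ι → Ideal S} {ν : ι → AddValuation K (WithTop ℤ)}

namespace IsValuationFamily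

lemma pairwise_isCoprime (h : IsValuationFamily S M ν) :
    Pairwise (Function.onFun IsCoprime M) := fun i j hij =>
  have := h.isMaximal i
  have := h.isMaximal j
  Ideal.isCoprime_of_isMaximal (h.injective.ne hij)

lemma exists_ne_zero_forall_eq [Finite ι] (h : IsValuationFamily S M ν) (w : ι → ℤ) :
    ∃ x ≠ 0, ∀ i, ν i x = w i := by
  classical
  refine exists_ne_zero_forall_addValuation_eq h.surjective (fun i => ?_) w
  obtain ⟨y, hy⟩ := Ideal.pi_quotient_surjective h.pairwise_isCoprime (Pi.single i 1)
  have hyi : y ∉ M i := by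
    have := h.isMaximal i
    rw [← Ideal.Quotient.eq_zero_iff_mem, hy, Pi.single_eq_same]
    exact one_ne_zero
  refine ⟨y, le_antisymm ?_ ((h.mem_iff y).1 y.2 i), fun j hj => ?_⟩
  · rw [h.mem_ideal_iff, not_le] at hyi
    lift ν i y to ℤ using hyi.ne_top with n
    norm_cast at hyi ⊢
    exact Int.lt_add_one_iff.1 hyi
  · rw [← h.mem_ideal_iff, ← Ideal.Quotient.eq_zero_iff_mem, hy, Pi.single_eq_of_ne hj]

/-- The fractional ideal `J^K(w)` of all elements of value at least `w`. -/
def valueIdeal (h : IsValuationFamily S M ν) (w : ι → ℤ) : Submodule O K where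
  carrier := {z | ∀ i, (w i : WithTop ℤ) ≤ ν i z}
  zero_mem' i := by simp
  add_mem' hx hy i := AddValuation.map_le_add _ (hx i) (hy i)
  smul_mem' a z hz i := by
    rw [Algebra.smul_def, AddValuation.map_mul]
    exact le_add_of_nonneg_of_le ((h.mem_iff _).1 (S.algebraMap_mem a) i) (hz i)

variable (h : IsValuationFamily S M ν)

lemma mem_valueIdeal {w : ι → ℤ} {z : K} :
    z ∈ h.valueIdeal w ↔ ∀ i, (w i : WithTop ℤ) ≤ ν i z := Iff.rfl

lemma valueIdeal_antitone : Antitone h.valueIdeal := fun _ _ hle _ hz i =>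
  (WithTop.coe_le_coe.2 (hle i)).trans (hz i)

lemma mem_valueIdeal_one (s : S) : (s : K) ∈ h.valueIdeal 1 ↔ s ∈ ⨅ i, M i := by
  simp only [mem_valueIdeal, Submodule.mem_iInf, h.mem_ideal_iff]
  rfl

lemma mul_mem_valueIdeal_add {x : K} {w : ι → ℤ} (hx : ∀ i, ν i x = w i) (u : ι → ℤ) (z : K) :
    z * x ∈ h.valueIdeal (u + w) ↔ z ∈ h.valueIdeal u := by
  simp only [mem_valueIdeal, AddValuation.map_mul, hx, Pi.add_apply, WithTop.coe_add,
    WithTop.add_le_add_iff_right WithTop.coe_ne_top]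

lemma mul_mem_valueIdeal {x : K} {w : ι → ℤ} (hx : ∀ i, ν i x = w i) (z : K) :
    z * x ∈ h.valueIdeal w ↔ z ∈ S := by
  rw [← zero_add w, h.mul_mem_valueIdeal_add hx, h.mem_iff]
  rfl

lemma valueIdeal_eq_mul_span {x : K} (hx0 : x ≠ 0) {w : ι → ℤ} (hx : ∀ i, ν i x = w i) :
    h.valueIdeal w = Subalgebra.toSubmodule S * Submodule.span O {x} := by
  ext z
  rw [Submodule.mem_mul_span_singleton]
  constructor
  · refine fun hz => ⟨z * x⁻¹, ?_, inv_mul_cancel_right₀ hx0 z⟩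
    rwa [Subalgebra.mem_toSubmodule, ← h.mul_mem_valueIdeal hx, inv_mul_cancel_right₀ hx0]
  · rintro ⟨y, hy, rfl⟩
    exact (h.mul_mem_valueIdeal hx y).2 hy

lemma div_valueIdeal [Finite ι] {C : Submodule O K} {γ : ι → ℤ}
    (hC : C / Subalgebra.toSubmodule S = h.valueIdeal γ) (w : ι → ℤ) :
    C / h.valueIdeal (γ - w) = h.valueIdeal w := by
  obtain ⟨x, hx0, hx⟩ := h.exists_ne_zero_forall_eq (γ - w)
  ext z
  rw [h.valueIdeal_eq_mul_span hx0 hx, submodule_div_mul, hC, mem_div_span_singleton,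
    ← h.mul_mem_valueIdeal_add hx w z, add_sub_cancel]

lemma quotLength_valueIdeal [Fintype ι] (w : ι → ℤ) :
    quotLength (h.valueIdeal w) (h.valueIdeal (w + 1)) = ∑ i, Module.length O (S ⧸ M i) := by
  obtain ⟨x, hx0, hx⟩ := h.exists_ne_zero_forall_eq w
  let f : S →ₗ[O] h.valueIdeal w :=
    ((LinearMap.mulRight O x).comp S.val.toLinearMap).codRestrict _ fun s =>
      (h.mul_mem_valueIdeal hx s).2 s.2
  have hf : Function.Surjective f := fun z =>
    ⟨⟨z * x⁻¹, (h.mul_mem_valueIdeal hx _).1 (by rw [inv_mul_cancel_right₀ hx0]; exact z.2)⟩,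
      Subtype.ext (inv_mul_cancel_right₀ hx0 _)⟩
  let q := ((h.valueIdeal (w + 1)).submoduleOf (h.valueIdeal w)).mkQ
  have hker : LinearMap.ker (q.comp f) = (⨅ i, M i).restrictScalars O := by
    ext s
    rw [LinearMap.ker_comp, Submodule.ker_mkQ, Submodule.restrictScalars_mem,
      ← h.mem_valueIdeal_one, ← h.mul_mem_valueIdeal_add hx, add_comm]
    rfl
  let e := (q.comp f).quotKerEquivOfSurjective ((Submodule.mkQ_surjective _).comp hf)
  calc quotLength (h.valueIdeal w) (h.valueIdeal (w + 1))
      = Module.length O (S ⧸ (⨅ i, M i).restrictScalars O) := by rw [← hker, e.length_eq]; rfl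
    _ = Module.length O (S ⧸ ⨅ i, M i) := (Submodule.Quotient.restrictScalarsEquiv O _).length_eq
    _ = ∑ i, Module.length O (S ⧸ M i) := length_quotient_iInf O h.pairwise_isCoprime

end IsValuationFamily

end ValueIdeal

section Duality

variable {O K : Type} {ι : Type*} [CommRing O] [Field K] [Algebra O K] [IsFractionRing O K]
  {S : Subalgebra O K} [Module.Finite O S] {M : ι → Ideal S}
  {ν : ι → AddValuation K (WithTop ℤ)} {b c : Submodule O K} {γ : ι → ℤ}

namespace IsValuationFamily

lemma isFracIdeal_valueIdeal [Finite ι] (h : IsValuationFamily S M ν) (w : ι → ℤ) :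
    IsFracIdeal (h.valueIdeal w) := by
  obtain ⟨x, hx0, hx⟩ := h.exists_ne_zero_forall_eq w
  rw [h.valueIdeal_eq_mul_span hx0 hx]
  exact (isFracIdeal_toSubmodule S).mul (isFracIdeal_span_singleton hx0)

variable [IsDomain O]

lemma quotLength_div_inf_valueIdeal [Finite ι] (h : IsValuationFamily S M ν) (hb : IsFracIdeal b)
    (hc : IsCanonicalIdeal c) (hγ : c / Subalgebra.toSubmodule S = h.valueIdeal γ) (w : ι → ℤ) :
    quotLength (c / b ⊓ h.valueIdeal w) (c / b ⊓ h.valueIdeal (w + 1)) =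
      quotLength (b ⊔ h.valueIdeal (γ - w - 1)) (b ⊔ h.valueIdeal (γ - w - 1 + 1)) := by
  have hdual (u : ι → ℤ) : c / b ⊓ h.valueIdeal u = c / (b ⊔ h.valueIdeal (γ - u)) := by
    rw [submodule_div_sup, h.div_valueIdeal hγ]
  rw [hdual, hdual, sub_add_cancel, ← sub_sub]
  refine hc.quotLength_div (hb.sup (h.isFracIdeal_valueIdeal _))
    (hb.sup (h.isFracIdeal_valueIdeal _)) (sup_le_sup_left (h.valueIdeal_antitone ?_) b)
  exact sub_le_self _ zero_le_one

lemma quotLength_div_inf_add_quotLength_inf [Fintype ι] (h : IsValuationFamily S M ν)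
    (hb : IsFracIdeal b) (hc : IsCanonicalIdeal c)
    (hγ : c / Subalgebra.toSubmodule S = h.valueIdeal γ) (w : ι → ℤ) :
    quotLength (c / b ⊓ h.valueIdeal w) (c / b ⊓ h.valueIdeal (w + 1)) +
      quotLength (b ⊓ h.valueIdeal (γ - w - 1)) (b ⊓ h.valueIdeal (γ - w - 1 + 1)) =
      ∑ i, Module.length O (S ⧸ M i) := by
  rw [h.quotLength_div_inf_valueIdeal hb hc hγ, add_comm, quotLength_inf_add_quotLength_sup,
    h.quotLength_valueIdeal]
  exact h.valueIdeal_antitone (le_add_of_nonneg_right zero_le_one)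

theorem qdim_div_inf_add_qdim_inf (k : Type) [Field k] [Fintype ι] [IsLocalRing O] [Algebra k O]
    [Algebra k K] [IsScalarTower k O K] (h : IsValuationFamily S M ν) (hb : IsFracIdeal b)
    (hc : IsCanonicalIdeal c) (hγ : c / Subalgebra.toSubmodule S = h.valueIdeal γ) (w : ι → ℤ) :
    qdim k (c / b ⊓ h.valueIdeal w) (c / b ⊓ h.valueIdeal (w + 1)) +
      qdim k (b ⊓ h.valueIdeal (γ - w - 1)) (b ⊓ h.valueIdeal (γ - w - 1 + 1)) =
      ∑ i, Module.finrank k (S ⧸ M i) := by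
  have hlen := h.quotLength_div_inf_add_quotLength_inf hb hc hγ w
  have hM (i : ι) : Module.length O (S ⧸ M i) ≠ ⊤ :=
    have := h.isMaximal i
    length_quotient_ne_top O (M i)
  obtain ⟨hcb_top, hb_top⟩ := WithTop.add_ne_top.1 (hlen ▸ ENat.sum_ne_top.2 fun i _ => hM i)
  simp only [finrank_eq_toNat_length_mul k O (S ⧸ M _), qdim_eq_toNat_quotLength_mul]
  rw [← add_mul, ← ENat.toNat_add hcb_top hb_top, hlen, ENat.toNat_sum fun i _ => hM i,
    Finset.sum_mul]

end IsValuationFamily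

end Duality

section IntegerValued

variable {K : Type*} [Field K]

/-- The additive valuation given by an integer-valued function satisfying the axioms of a
valuation away from zero; its value at zero is discarded in favour of `⊤`. -/
noncomputable def addValuationOfInt (ν : K → ℤ)
    (hmul : ∀ x y, x ≠ 0 → y ≠ 0 → ν (x * y) = ν x + ν y)
    (hadd : ∀ x y, x ≠ 0 → y ≠ 0 → x + y ≠ 0 → min (ν x) (ν y) ≤ ν (x + y)) :
    AddValuation K (WithTop ℤ) :=
  open Classical in
  AddValuation.of (fun z => if z = 0 then ⊤ else (ν z : WithTop ℤ)) (if_pos rfl)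
    (by
      have h1 := hmul 1 1 one_ne_zero one_ne_zero
      rw [mul_one, left_eq_add] at h1
      simp [h1])
    (fun x y => by
      rcases eq_or_ne x 0 with rfl | hx
      · exact (min_le_right _ _).trans_eq (by rw [zero_add])
      rcases eq_or_ne y 0 with rfl | hy
      · exact (min_le_left _ _).trans_eq (by rw [add_zero])
      by_cases hxy : x + y = 0
      · simp [hxy]
      simpa only [hx, hy, hxy, if_false] using mod_cast hadd x y hx hy hxy)
    (fun x y => by
      by_cases hx : x = 0
      · simp [hx]
      by_cases hy : y = 0
      · simp [hy]
      simpa only [hx, hy, mul_eq_zero, or_self, if_false] using mod_cast hmul x y hx hy)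

variable {ν : K → ℤ} {hmul : ∀ x y, x ≠ 0 → y ≠ 0 → ν (x * y) = ν x + ν y}
  {hadd : ∀ x y, x ≠ 0 → y ≠ 0 → x + y ≠ 0 → min (ν x) (ν y) ≤ ν (x + y)}

lemma addValuationOfInt_of_ne_zero {z : K} (hz : z ≠ 0) :
    addValuationOfInt ν hmul hadd z = ν z := by
  classical exact if_neg hz

lemma coe_le_addValuationOfInt_iff {n : ℤ} {z : K} :
    (n : WithTop ℤ) ≤ addValuationOfInt ν hmul hadd z ↔ z = 0 ∨ n ≤ ν z := by
  by_cases hz : z = 0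
  · simp [hz]
  · simp [hz, addValuationOfInt_of_ne_zero]

lemma addValuationOfInt_surjective (hsurj : ∀ n, ∃ x, x ≠ 0 ∧ ν x = n) :
    Function.Surjective (addValuationOfInt ν hmul hadd) := fun n => by
  cases n with
  | top => exact ⟨0, AddValuation.map_zero _⟩
  | coe n =>
    obtain ⟨x, hx0, rfl⟩ := hsurj n
    exact ⟨x, addValuationOfInt_of_ne_zero hx0⟩

lemma isValuationFamily_addValuationOfInt {O ι : Type*} [CommRing O] [Algebra O K]
    {S : Subalgebra O K} {M : ι → Ideal S} {v : ι → K → ℤ}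
    (hmul : ∀ (i : ι) (x y : K), x ≠ 0 → y ≠ 0 → v i (x * y) = v i x + v i y)
    (hadd : ∀ (i : ι) (x y : K), x ≠ 0 → y ≠ 0 → x + y ≠ 0 →
      min (v i x) (v i y) ≤ v i (x + y))
    (hM : ∀ i, (M i).IsMaximal) (hinj : Function.Injective M)
    (hsurj : ∀ (i : ι) (n : ℤ), ∃ x : K, x ≠ 0 ∧ v i x = n)
    (hint : ∀ x : K, x ≠ 0 → (x ∈ S ↔ ∀ i, 0 ≤ v i x))
    (hmax : ∀ (i : ι) (x : K) (hx : x ∈ S), x ≠ 0 → ((⟨x, hx⟩ : S) ∈ M i ↔ 1 ≤ v i x)) :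
    IsValuationFamily S M fun i => addValuationOfInt (v i) (hmul i) (hadd i) where
  surjective i := addValuationOfInt_surjective (hsurj i)
  isMaximal := hM
  injective := hinj
  mem_iff x := by
    rcases eq_or_ne x 0 with rfl | hx
    · simp
    · simp only [hint x hx, addValuationOfInt_of_ne_zero hx, WithTop.coe_nonneg]
  mem_ideal_iff i x := by
    rcases eq_or_ne x 0 with rfl | hx
    · simp
    · have hx' : (x : K) ≠ 0 := Subtype.coe_injective.ne hx
      simp only [hmax i x x.2 hx', addValuationOfInt_of_ne_zero hx', WithTop.one_le_coe]

end IntegerValued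

theorem statement_19_general (k O K : Type) [Field k] [CommRing O] [IsDomain O] [IsLocalRing O]
    [Algebra k O] [Field K] [Algebra O K] [IsFractionRing O K] [Algebra k K] [IsScalarTower k O K]
    [Module.Finite O (integralClosure O K)]
    (ι : Type*) [Fintype ι] (M : ι → Ideal (integralClosure O K))
    (hMmax : ∀ i, (M i).IsMaximal) (hMinj : Function.Injective M)
    (v : ι → K → ℤ)
    (hvmul : ∀ (i : ι) (x y : K), x ≠ 0 → y ≠ 0 → v i (x * y) = v i x + v i y)
    (hvadd : ∀ (i : ι) (x y : K), x ≠ 0 → y ≠ 0 → x + y ≠ 0 →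
      min (v i x) (v i y) ≤ v i (x + y))
    (hvsurj : ∀ (i : ι) (n : ℤ), ∃ x : K, x ≠ 0 ∧ v i x = n)
    (hvint : ∀ x : K, x ≠ 0 → (x ∈ integralClosure O K ↔ ∀ i, 0 ≤ v i x))
    (hvmax : ∀ (i : ι) (x : K) (hx : x ∈ integralClosure O K), x ≠ 0 →
      ((⟨x, hx⟩ : integralClosure O K) ∈ M i ↔ 1 ≤ v i x))
    (J : Submodule O K → (ι → ℤ) → Submodule O K)
    (hJ : ∀ (a : Submodule O K) (w : ι → ℤ) (z : K),
      z ∈ J a w ↔ z ∈ a ∧ (z = 0 ∨ ∀ i, w i ≤ v i z))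
    (b : Submodule O K) (hb : IsFracIdeal b) (c : Submodule O K) (hc : IsCanonicalIdeal c)
    (γ : ι → ℤ) (hγ : c / Subalgebra.toSubmodule (integralClosure O K) = J ⊤ γ) (w : ι → ℤ) :
    (qdim k (J (c / b) w) (J (c / b) (w + 1)) : ℤ) =
      ∑ i, (Module.finrank k (integralClosure O K ⧸ M i) : ℤ) -
        qdim k (J b (γ - w - 1)) (J b (γ - w - 1 + 1)) := by
  have h := isValuationFamily_addValuationOfInt hvmul hvadd hMmax hMinj hvsurj hvint hvmax
  have hJ_eq (a : Submodule O K) (u : ι → ℤ) : J a u = a ⊓ h.valueIdeal u := by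
    ext z
    simp only [hJ, Submodule.mem_inf, h.mem_valueIdeal, coe_le_addValuationOfInt_iff,
      forall_or_left]
  rw [hJ_eq, top_inf_eq] at hγ
  simp only [hJ_eq, eq_sub_iff_add_eq]
  exact_mod_cast h.qdim_div_inf_add_qdim_inf k hb hc hγ w

theorem statement_19 (k O K : Type) [Field k] [PerfectField k]
    [CommRing O] [IsDomain O] [IsNoetherianRing O] [IsLocalRing O] [Algebra k O]
    [Field K] [Algebra O K] [IsFractionRing O K] [Algebra k K] [IsScalarTower k O K]
    (hdim : ringKrullDim O = 1)
    (hfin : Module.Finite O (integralClosure O K))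
    (OB : Submodule O K) (hOB : OB = Subalgebra.toSubmodule (integralClosure O K))
    (r : ℕ) (M : Fin r → Ideal (integralClosure O K))
    (hMmax : ∀ i, (M i).IsMaximal)
    (hMinj : Function.Injective M)
    (hMall : ∀ P : Ideal (integralClosure O K), P.IsMaximal → ∃ i, P = M i)
    (v : Fin r → K → ℤ)
    (hvmul : ∀ (i : Fin r) (x y : K), x ≠ 0 → y ≠ 0 → v i (x * y) = v i x + v i y)
    (hvadd : ∀ (i : Fin r) (x y : K), x ≠ 0 → y ≠ 0 → x + y ≠ 0 →
      min (v i x) (v i y) ≤ v i (x + y))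
    (hvsurj : ∀ (i : Fin r) (n : ℤ), ∃ x : K, x ≠ 0 ∧ v i x = n)
    (hvint : ∀ x : K, x ≠ 0 → (x ∈ integralClosure O K ↔ ∀ i, 0 ≤ v i x))
    (hvmax : ∀ (i : Fin r) (x : K) (hx : x ∈ integralClosure O K), x ≠ 0 →
      ((⟨x, hx⟩ : integralClosure O K) ∈ M i ↔ 1 ≤ v i x))
    (d : Fin r → ℕ) (hd : ∀ i, d i = Module.finrank k ((integralClosure O K) ⧸ M i))
    (J : Submodule O K → (Fin r → ℤ) → Submodule O K)
    (hJ : ∀ (a : Submodule O K) (w : Fin r → ℤ) (z : K),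
      z ∈ J a w ↔ z ∈ a ∧ (z = 0 ∨ ∀ i, w i ≤ v i z))
    (b : Submodule O K) (hb : IsFracIdeal b)
    (γb : Fin r → ℤ) (hγb : γb = gammaB v OB b)
    (c : Submodule O K) (hc : IsCanonicalIdeal c) (hcO : c / OB = J (⊤ : Submodule O K) γb) :
    ∀ w : Fin r → ℤ,
      (qdim k (J (c / b) w) (J (c / b) (w + 1)) : ℤ) =
        (∑ i, (d i : ℤ)) - (qdim k (J b (γb - w - 1)) (J b ((γb - w - 1) + 1)) : ℤ) := by
  subst hOB
  simpa only [hd] using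
    statement_19_general k O K (Fin r) M hMmax hMinj v hvmul hvadd hvsurj hvint hvmax
      J hJ b hb c hc γb hcO
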